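/- Let m, n ≥ 1 and set N = m + n. Consider the graph Γ with vertex set Σ and an edge between σ and σ·τ_c whenever 1 ≤ c ≤ N − 1 and both σ and σ·τ_c lie in Σ. Then every closed walk in Γ (a sequence v_0, v_1, ..., v_ℓ of vertices with consecutive vertices adjacent and v_ℓ = v_0) can be transformed into the constant walk at v_0 by finitely many applications, in either direction, of the following moves: (i) replacing a consecutive subsequence v, w, v by v; (ii) replacing a consecutive subsequence v, v·τ_c, v·τ_c·τ_d by v, v·τ_d, v·τ_d·τ_c, where 1 ≤ c, d ≤ N − 1, |c − d| ≥ 2, and all four generators v, v·τ_c, v·τ_d, v·τ_c·τ_d lie in Σ; (iii) replacing a consecutive subsequence v, v·τ_c, v·τ_c·τ_{c+1}, v·τ_c·τ_{c+1}·τ_c by v, v·τ_{c+1}, v·τ_{c+1}·τ_c, v·τ_{c+1}·τ_c·τ_{c+1}, where 1 ≤ c ≤ N − 2 and all six generators v, v·τ_c, v·τ_c·τ_{c+1}, v·τ_c·τ_{c+1}·τ_c, v·τ_{c+1}·τ_c, v·τ_{c+1} lie in Σ. (This expresses that the 2-complex W_{m,n} obtained from Γ by attaching square and hexagon 2-cells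 is simply connected; note v·τ_c·τ_{c+1}·τ_c = v·τ_{c+1}·τ_c·τ_{c+1}.) -/

import Mathlib

/-- The set `Σ` of generators `σ` (0-indexed: columns/rows `0,…,m+n−1`) with
`σ(j) ∈ {0,…,m}` for `j < m` and `σ(j) ∈ {m−1,…,m+n−1}` for `j ≥ m`. -/
def GenSet (m n : ℕ) : Set (Equiv.Perm (Fin (m + n))) :=
  {σ | ∀ j : Fin (m + n), ((j : ℕ) < m → (σ j : ℕ) ≤ m) ∧ (m ≤ (j : ℕ) → m ≤ (σ j : ℕ) + 1)}

/-- The column `c` as an element of `Fin N`, given `c + 1 < N`. -/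
def colFin {N : ℕ} (c : ℕ) (hc : c + 1 < N) : Fin N := ⟨c, Nat.lt_of_succ_lt hc⟩

/-- The column `c + 1` as an element of `Fin N`, given `c + 1 < N`. -/
def colFin' {N : ℕ} (c : ℕ) (hc : c + 1 < N) : Fin N := ⟨c + 1, hc⟩

/-- The generator `σ·τ_c = σ^{c,c+1}`. -/
def tmul {N : ℕ} (σ : Equiv.Perm (Fin N)) (c : ℕ) (hc : c + 1 < N) : Equiv.Perm (Fin N) :=
  (Equiv.swap (colFin c hc) (colFin' c hc)).trans σ

/-- Adjacency in the graph `Γ`: `σ` and `σ·τ_c` are adjacent when both lie in `Σ`. -/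
def GridAdj (m n : ℕ) (σ σ' : Equiv.Perm (Fin (m + n))) : Prop :=
  σ ∈ GenSet m n ∧ σ' ∈ GenSet m n ∧ ∃ (c : ℕ) (hc : c + 1 < m + n), σ' = tmul σ c hc

/-- The elementary moves on walks in `Γ`: (i) removing a backtrack `v, w, v ↦ v`;
(ii) replacing one side of a square (for distant transpositions `τ_c`, `τ_d`) by the other;
(iii) replacing one side of a hexagon (for the braid relation between `τ_c` and `τ_{c+1}`)
by the other. -/
inductive GridMove (m n : ℕ) :
    List (Equiv.Perm (Fin (m + n))) → List (Equiv.Perm (Fin (m + n))) → Prop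
  | backtrack (pre post : List (Equiv.Perm (Fin (m + n)))) (v w : Equiv.Perm (Fin (m + n))) :
      v ∈ GenSet m n → w ∈ GenSet m n → (∃ (c : ℕ) (hc : c + 1 < m + n), w = tmul v c hc) →
      GridMove m n (pre ++ v :: w :: v :: post) (pre ++ v :: post)
  | square (pre post : List (Equiv.Perm (Fin (m + n)))) (v : Equiv.Perm (Fin (m + n)))
      (c d : ℕ) (hc : c + 1 < m + n) (hd : d + 1 < m + n) :
      (c + 2 ≤ d ∨ d + 2 ≤ c) →
      v ∈ GenSet m n → tmul v c hc ∈ GenSet m n → tmul v d hd ∈ GenSet m n →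
      tmul (tmul v c hc) d hd ∈ GenSet m n →
      GridMove m n (pre ++ v :: tmul v c hc :: tmul (tmul v c hc) d hd :: post)
        (pre ++ v :: tmul v d hd :: tmul (tmul v d hd) c hc :: post)
  | hexagon (pre post : List (Equiv.Perm (Fin (m + n)))) (v : Equiv.Perm (Fin (m + n)))
      (c : ℕ) (hc1 : c + 1 < m + n) (hc2 : c + 1 + 1 < m + n) :
      v ∈ GenSet m n → tmul v c hc1 ∈ GenSet m n →
      tmul (tmul v c hc1) (c + 1) hc2 ∈ GenSet m n →
      tmul (tmul (tmul v c hc1) (c + 1) hc2) c hc1 ∈ GenSet m n →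
      tmul (tmul v (c + 1) hc2) c hc1 ∈ GenSet m n →
      tmul v (c + 1) hc2 ∈ GenSet m n →
      GridMove m n
        (pre ++ v :: tmul v c hc1 :: tmul (tmul v c hc1) (c + 1) hc2 ::
          tmul (tmul (tmul v c hc1) (c + 1) hc2) c hc1 :: post)
        (pre ++ v :: tmul v (c + 1) hc2 :: tmul (tmul v (c + 1) hc2) c hc1 ::
          tmul (tmul (tmul v (c + 1) hc2) c hc1) (c + 1) hc2 :: post)


/-- Homotopy of walks. -/
def Hpy (m n : ℕ) (l l' : List (Equiv.Perm (Fin (m + n)))) : Prop :=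
  Relation.ReflTransGen (fun a b => GridMove m n a b ∨ GridMove m n b a) l l'

theorem Hpy.refl {m n : ℕ} (l : List (Equiv.Perm (Fin (m + n)))) : Hpy m n l l :=
  Relation.ReflTransGen.refl

theorem Hpy.trans {m n : ℕ} {a b c : List (Equiv.Perm (Fin (m + n)))}
    (h : Hpy m n a b) (h' : Hpy m n b c) : Hpy m n a c :=
  Relation.ReflTransGen.trans h h'

theorem Hpy.symm {m n : ℕ} {a b : List (Equiv.Perm (Fin (m + n)))}
    (h : Hpy m n a b) : Hpy m n b a := by
  induction h with
  | refl => exact Hpy.refl _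
  | tail _ h ih => exact Hpy.trans (Relation.ReflTransGen.single h.symm) ih

theorem GridMove.ctx {m n : ℕ} {a b : List (Equiv.Perm (Fin (m + n)))}
    (h : GridMove m n a b) (p q : List (Equiv.Perm (Fin (m + n)))) :
    GridMove m n (p ++ a ++ q) (p ++ b ++ q) := by
  cases h with
  | backtrack pre post v w h1 h2 h3 =>
    simpa using GridMove.backtrack (p ++ pre) (post ++ q) v w h1 h2 h3
  | square pre post v c d hc hd h1 h2 h3 h4 h5 =>
    simpa using GridMove.square (p ++ pre) (post ++ q) v c d hc hd h1 h2 h3 h4 h5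
  | hexagon pre post v c hc1 hc2 h1 h2 h3 h4 h5 h6 =>
    simpa using GridMove.hexagon (p ++ pre) (post ++ q) v c hc1 hc2 h1 h2 h3 h4 h5 h6

theorem Hpy.ctx {m n : ℕ} {a b : List (Equiv.Perm (Fin (m + n)))}
    (h : Hpy m n a b) (p q : List (Equiv.Perm (Fin (m + n)))) :
    Hpy m n (p ++ a ++ q) (p ++ b ++ q) := by
  induction h with
  | refl => exact Hpy.refl _
  | tail _ h ih =>
    exact ih.trans (Relation.ReflTransGen.single (h.imp (fun h => h.ctx p q) (fun h => h.ctx p q)))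

theorem Hpy.cons {m n : ℕ} {a b : List (Equiv.Perm (Fin (m + n)))}
    (h : Hpy m n a b) (v : Equiv.Perm (Fin (m + n))) : Hpy m n (v :: a) (v :: b) := by
  simpa using h.ctx [v] []

theorem Hpy.of {m n : ℕ} {a b : List (Equiv.Perm (Fin (m + n)))}
    (h : GridMove m n a b) : Hpy m n a b := Relation.ReflTransGen.single (Or.inl h)

theorem tmul_apply {N : ℕ} (v : Equiv.Perm (Fin N)) (c : ℕ) (hc : c + 1 < N) (x : Fin N) :
    tmul v c hc x = if x = colFin c hc then v (colFin' c hc) else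
      if x = colFin' c hc then v (colFin c hc) else v x := by
  simp only [tmul, Equiv.trans_apply, Equiv.swap_apply_def]
  split_ifs <;> rfl

theorem tmul_left {N : ℕ} (v : Equiv.Perm (Fin N)) (c : ℕ) (hc : c + 1 < N) :
    tmul v c hc (colFin c hc) = v (colFin' c hc) := by simp [tmul]

theorem tmul_right {N : ℕ} (v : Equiv.Perm (Fin N)) (c : ℕ) (hc : c + 1 < N) :
    tmul v c hc (colFin' c hc) = v (colFin c hc) := by simp [tmul]

theorem tmul_other {N : ℕ} (v : Equiv.Perm (Fin N)) (c : ℕ) (hc : c + 1 < N) (x : Fin N)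
    (h1 : (x : ℕ) ≠ c) (h2 : (x : ℕ) ≠ c + 1) : tmul v c hc x = v x := by
  have e1 : x ≠ colFin c hc := fun h => h1 (by rw [h]; rfl)
  have e2 : x ≠ colFin' c hc := fun h => h2 (by rw [h]; rfl)
  rw [tmul_apply, if_neg e1, if_neg e2]

theorem tmul_tmul {N : ℕ} (v : Equiv.Perm (Fin N)) (c : ℕ) (hc : c + 1 < N) :
    tmul (tmul v c hc) c hc = v := by
  ext x; simp [tmul]

theorem tmul_comm {N : ℕ} (v : Equiv.Perm (Fin N)) (c d : ℕ) (hc : c + 1 < N) (hd : d + 1 < N)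
    (h : c + 2 ≤ d ∨ d + 2 ≤ c) :
    tmul (tmul v c hc) d hd = tmul (tmul v d hd) c hc := by
  ext x
  simp only [tmul_apply, colFin, colFin', Fin.ext_iff]
  split_ifs <;> first | rfl | (exfalso; omega)

theorem tmul_braid {N : ℕ} (v : Equiv.Perm (Fin N)) (c : ℕ) (hc : c + 1 < N)
    (hd : c + 1 + 1 < N) :
    tmul (tmul (tmul v c hc) (c + 1) hd) c hc
      = tmul (tmul (tmul v (c + 1) hd) c hc) (c + 1) hd := by
  ext x
  simp only [tmul_apply, colFin, colFin', Fin.ext_iff]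
  split_ifs <;> first | rfl | (exfalso; omega)

/-- descent -/
def Des {N : ℕ} (v : Equiv.Perm (Fin N)) (c : ℕ) (hc : c + 1 < N) : Prop :=
  (v (colFin' c hc) : ℕ) < v (colFin c hc)

theorem des_or {N : ℕ} (v : Equiv.Perm (Fin N)) (c : ℕ) (hc : c + 1 < N) :
    Des v c hc ∨ Des (tmul v c hc) c hc := by
  unfold Des
  rw [tmul_left, tmul_right]
  have : v (colFin' c hc) ≠ v (colFin c hc) := by
    intro h
    have := v.injective h
    simp [colFin, colFin'] at this
  have h2 : (v (colFin' c hc) : ℕ) ≠ v (colFin c hc) := fun h => this (Fin.ext h)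
  omega

theorem mem_tmul {m n : ℕ} {v : Equiv.Perm (Fin (m + n))} (hv : v ∈ GenSet m n)
    (c : ℕ) (hc : c + 1 < m + n) (h : c + 1 ≠ m) : tmul v c hc ∈ GenSet m n := by
  intro j
  have h0 := hv j
  have h1 := hv (colFin c hc)
  have h2 := hv (colFin' c hc)
  rw [tmul_apply]
  simp only [colFin, colFin', Fin.ext_iff] at *
  split_ifs <;> omega

theorem mem_tmul_of_des {m n : ℕ} {v : Equiv.Perm (Fin (m + n))} (hv : v ∈ GenSet m n)
    (c : ℕ) (hc : c + 1 < m + n) (h : Des v c hc) : tmul v c hc ∈ GenSet m n := by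
  by_cases hcm : c + 1 = m
  · intro j
    have h0 := hv j
    have h1 := hv (colFin c hc)
    have h2 := hv (colFin' c hc)
    unfold Des at h
    rw [tmul_apply]
    simp only [colFin, colFin', Fin.ext_iff] at *
    split_ifs <;> omega
  · exact mem_tmul hv c hc hcm

/-- Two consecutive descents avoid the middle. -/
theorem des_des {m n : ℕ} {v : Equiv.Perm (Fin (m + n))} (hv : v ∈ GenSet m n)
    (c : ℕ) (hc : c + 1 < m + n) (hd : c + 1 + 1 < m + n) (h : Des v c hc)
    (h' : Des v (c + 1) hd) : c + 1 ≠ m ∧ c + 1 + 1 ≠ m := by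
  have h1 := hv (colFin c hc)
  have h2 := hv (colFin' c hc)
  have h3 := hv (colFin' (c + 1) hd)
  unfold Des at h h'
  simp only [colFin, colFin'] at *
  omega

/-- Potential. -/
def pot {N : ℕ} (v : Equiv.Perm (Fin N)) : ℤ := ∑ j : Fin N, (j : ℤ) * (v j : ℤ)

theorem pot_lt {N : ℕ} (v : Equiv.Perm (Fin N)) (c : ℕ) (hc : c + 1 < N) (h : Des v c hc) :
    pot v < pot (tmul v c hc) := by
  unfold pot
  rw [← sub_pos, ← Finset.sum_sub_distrib]
  have hne : colFin c hc ≠ colFin' c hc := by simp [colFin, colFin']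
  rw [Fintype.sum_eq_add (colFin c hc) (colFin' c hc) hne]
  · rw [tmul_left, tmul_right]
    unfold Des at h
    have e1 : ((colFin c hc : ℕ) : ℤ) = c := rfl
    have e2 : ((colFin' c hc : ℕ) : ℤ) = c + 1 := rfl
    rw [e1, e2]
    have h' : ((v (colFin' c hc) : ℕ) : ℤ) < (v (colFin c hc) : ℕ) := by exact_mod_cast h
    linarith
  · rintro x ⟨h1, h2⟩
    rw [tmul_apply, if_neg h1, if_neg h2, sub_self]

theorem pot_induction {N : ℕ} {P : Equiv.Perm (Fin N) → Prop}
    (h : ∀ v, (∀ w, pot v < pot w → P w) → P v) (v : Equiv.Perm (Fin N)) : P v := by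
  have wf : WellFounded (fun a b : Equiv.Perm (Fin N) => pot b < pot a) := by
    have : IsTrans (Equiv.Perm (Fin N)) (fun a b => pot b < pot a) :=
      ⟨fun a b c h1 h2 => lt_trans h2 h1⟩
    have : Std.Irrefl (fun a b : Equiv.Perm (Fin N) => pot b < pot a) := ⟨fun a => lt_irrefl _⟩
    exact Finite.wellFounded_of_trans_of_irrefl _
  exact wf.induction v h

theorem eq_one_of_no_des {N : ℕ} (v : Equiv.Perm (Fin N))
    (h : ∀ c hc, ¬ Des v c hc) : v = 1 := by
  have hm : StrictMono v := by
    cases N with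
    | zero => exact fun a => a.elim0
    | succ N =>
      rw [Fin.strictMono_iff_lt_succ]
      intro i
      have h1 := h i (by omega)
      have h2 := (des_or v i (by omega)).resolve_left h1
      unfold Des at h2
      rw [tmul_left, tmul_right] at h2
      exact h2
  have := Subsingleton.elim (hm.orderIsoOfSurjective v v.surjective) (OrderIso.refl _)
  ext x
  have h3 := congrArg (fun f : Fin N ≃o Fin N => f x) this
  have h4 : v x = x := by simpa using h3
  simp [h4]

/-- Descending walks to the identity. -/
inductive Desc (m n : ℕ) : Equiv.Perm (Fin (m + n)) → List (Equiv.Perm (Fin (m + n))) → Prop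
  | nil : Desc m n 1 []
  | cons (v : Equiv.Perm (Fin (m + n))) (c : ℕ) (hc : c + 1 < m + n)
      (l : List (Equiv.Perm (Fin (m + n)))) : v ∈ GenSet m n → Des v c hc →
      Desc m n (tmul v c hc) l → Desc m n v (tmul v c hc :: l)

theorem exists_desc {m n : ℕ} (v : Equiv.Perm (Fin (m + n))) :
    v ∈ GenSet m n → ∃ l, Desc m n v l := by
  induction v using pot_induction with
  | h v ih =>
    intro hv
    by_cases h : ∃ c hc, Des v c hc
    · obtain ⟨c, hc, h⟩ := h
      obtain ⟨l, hl⟩ := ih _ (pot_lt v c hc h) (mem_tmul_of_des hv c hc h)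
      exact ⟨_, Desc.cons v c hc l hv h hl⟩
    · push Not at h
      have := eq_one_of_no_des v h
      subst this
      exact ⟨[], Desc.nil⟩

theorem not_des_one {N : ℕ} (c : ℕ) (hc : c + 1 < N) : ¬ Des (1 : Equiv.Perm (Fin N)) c hc := by
  simp [Des, colFin, colFin']

theorem des_tmul_far {N : ℕ} {v : Equiv.Perm (Fin N)} {c d : ℕ} (hc : c + 1 < N) (hd : d + 1 < N)
    (h : c + 2 ≤ d ∨ d + 2 ≤ c) (hdes : Des v d hd) : Des (tmul v c hc) d hd := by
  unfold Des at *
  rw [tmul_other, tmul_other]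
  · exact hdes
  all_goals simp only [colFin, colFin']; omega

/-- Uniqueness in the square case. -/
theorem desc_square {m n : ℕ} {v : Equiv.Perm (Fin (m + n))}
    (ih : ∀ w, pot v < pot w → ∀ l l', Desc m n w l → Desc m n w l' → Hpy m n (w :: l) (w :: l'))
    (hv : v ∈ GenSet m n) {c d : ℕ} (hc : c + 1 < m + n) (hd : d + 1 < m + n)
    (h : c + 2 ≤ d ∨ d + 2 ≤ c) (h1 : Des v c hc) (h2 : Des v d hd)
    {l l' : List (Equiv.Perm (Fin (m + n)))}
    (hl : Desc m n (tmul v c hc) l) (hl' : Desc m n (tmul v d hd) l') :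
    Hpy m n (v :: tmul v c hc :: l) (v :: tmul v d hd :: l') := by
  have mc := mem_tmul_of_des hv c hc h1
  have md := mem_tmul_of_des hv d hd h2
  have h3 := des_tmul_far hc hd h h2
  have h4 := des_tmul_far hd hc h.symm h1
  have mcd := mem_tmul_of_des mc d hd h3
  obtain ⟨k, hk⟩ := exists_desc _ mcd
  have e1 := (ih _ (pot_lt v c hc h1) _ _ hl (Desc.cons _ d hd k mc h3 hk)).cons v
  have e2 := Hpy.of (GridMove.square [] k v c d hc hd h hv mc md mcd)
  rw [tmul_comm v c d hc hd h] at hk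
  have e3 := (ih _ (pot_lt v d hd h2) _ _ hl' (Desc.cons _ c hc k md h4 hk)).cons v
  exact (e1.trans e2).trans e3.symm

/-- Uniqueness in the hexagon case. -/
theorem desc_hexagon {m n : ℕ} {v : Equiv.Perm (Fin (m + n))}
    (ih : ∀ w, pot v < pot w → ∀ l l', Desc m n w l → Desc m n w l' → Hpy m n (w :: l) (w :: l'))
    (hv : v ∈ GenSet m n) {c : ℕ} (hc : c + 1 < m + n) (hd : c + 1 + 1 < m + n)
    (h1 : Des v c hc) (h2 : Des v (c + 1) hd)
    {l l' : List (Equiv.Perm (Fin (m + n)))}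
    (hl : Desc m n (tmul v c hc) l) (hl' : Desc m n (tmul v (c + 1) hd) l') :
    Hpy m n (v :: tmul v c hc :: l) (v :: tmul v (c + 1) hd :: l') := by
  obtain ⟨ha, hb⟩ := des_des hv c hc hd h1 h2
  have mc := mem_tmul hv c hc ha
  have md := mem_tmul hv (c + 1) hd hb
  have mcd := mem_tmul mc (c + 1) hd hb
  have mdc := mem_tmul md c hc ha
  have mcdc := mem_tmul mcd c hc ha
  have q1 : c + 1 + 1 ≠ c := by omega
  have q2 : c ≠ c + 1 + 1 := by omega
  have d1 : Des (tmul v c hc) (c + 1) hd := by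
    simp only [Des, tmul_apply, colFin, colFin', Fin.ext_iff] at h1 h2 ⊢; simp [q1, q2]; omega
  have d2 : Des (tmul (tmul v c hc) (c + 1) hd) c hc := by
    simp only [Des, tmul_apply, colFin, colFin', Fin.ext_iff] at h1 h2 ⊢; simp [q1, q2]; omega
  have d3 : Des (tmul v (c + 1) hd) c hc := by
    simp only [Des, tmul_apply, colFin, colFin', Fin.ext_iff] at h1 h2 ⊢; simp [q1, q2]; omega
  have d4 : Des (tmul (tmul v (c + 1) hd) c hc) (c + 1) hd := by
    simp only [Des, tmul_apply, colFin, colFin', Fin.ext_iff] at h1 h2 ⊢; simp [q1, q2]; omega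
  obtain ⟨k, hk⟩ := exists_desc _ mcdc
  have e1 := (ih _ (pot_lt v c hc h1) _ _ hl
    (Desc.cons _ (c + 1) hd _ mc d1 (Desc.cons _ c hc k mcd d2 hk))).cons v
  have e2 := Hpy.of (GridMove.hexagon [] k v c hc hd hv mc mcd mcdc mdc md)
  rw [tmul_braid] at hk
  have e3 := (ih _ (pot_lt v (c + 1) hd h2) _ _ hl'
    (Desc.cons _ c hc _ md d3 (Desc.cons _ (c + 1) hd k mdc d4 hk))).cons v
  exact (e1.trans e2).trans e3.symm

theorem desc_unique {m n : ℕ} (v : Equiv.Perm (Fin (m + n))) :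
    ∀ l l', Desc m n v l → Desc m n v l' → Hpy m n (v :: l) (v :: l') := by
  induction v using pot_induction with
  | h v ih =>
    intro l l' hl hl'
    cases hl with
    | nil =>
      cases hl' with
      | nil => exact Hpy.refl _
      | cons _ c hc l hv h hl => exact absurd h (not_des_one c hc)
    | cons _ c hc l hv h hl =>
      cases hl' with
      | nil => exact absurd h (not_des_one c hc)
      | cons _ d hd l' _ h' hl' =>
        by_cases hfar : c + 2 ≤ d ∨ d + 2 ≤ c
        · exact desc_square ih hv hc hd hfar h h' hl hl'
        · obtain rfl | rfl | rfl : c = d ∨ d = c + 1 ∨ c = d + 1 := by omega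
          · exact (ih _ (pot_lt v c hc h) _ _ hl hl').cons v
          · exact desc_hexagon ih hv hc hd h h' hl hl'
          · exact (desc_hexagon ih hv hd hc h' h hl' hl).symm

theorem desc_back {m n : ℕ} {v : Equiv.Perm (Fin (m + n))} {k : List (Equiv.Perm (Fin (m + n)))}
    (h : Desc m n v k) : ∃ R, Hpy m n (v :: k ++ R) [v] := by
  induction h with
  | nil => exact ⟨[], Hpy.refl _⟩
  | cons v c hc l hv hd _ ih =>
    obtain ⟨R, hR⟩ := ih
    refine ⟨R ++ [v], ?_⟩
    have e1 := hR.ctx [v] [v]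
    have e2 := Hpy.of (GridMove.backtrack [] [] v (tmul v c hc) hv
      (mem_tmul_of_des hv c hc hd) ⟨c, hc, rfl⟩)
    have e3 := Hpy.trans e1 e2
    simpa using e3

theorem walk_desc {m n : ℕ} (t : List (Equiv.Perm (Fin (m + n)))) :
    ∀ (v u : Equiv.Perm (Fin (m + n))) (k k' : List (Equiv.Perm (Fin (m + n)))),
    (v :: t).IsChain (GridAdj m n) → (v :: t).getLast? = some u → v ∈ GenSet m n →
    Desc m n u k → Desc m n v k' → Hpy m n (v :: t ++ k) (v :: k') := by
  induction t with
  | nil =>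
    intro v u k k' _ hlast _ hk hk'
    simp only [List.getLast?_singleton, Option.some.injEq] at hlast
    subst hlast
    exact desc_unique _ _ _ hk hk'
  | cons w t ih =>
    intro v u k k' hch hlast hv hk hk'
    rw [List.isChain_cons_cons] at hch
    obtain ⟨⟨_, hw, c, hc, rfl⟩, hch⟩ := hch
    rw [List.getLast?_cons_cons] at hlast
    rcases des_or v c hc with hd | hd
    · obtain ⟨q, hq⟩ := exists_desc _ hw
      have e1 := (ih _ u k q hch hlast hw hk hq).cons v
      exact e1.trans (desc_unique v _ _ (Desc.cons v c hc q hv hd hq) hk')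
    · have hq : Desc m n (tmul v c hc) (v :: k') := by
        have := Desc.cons (tmul v c hc) c hc k' hw hd (by rw [tmul_tmul]; exact hk')
        rwa [tmul_tmul] at this
      have e1 := (ih _ u k _ hch hlast hw hk hq).cons v
      exact e1.trans (Hpy.of (GridMove.backtrack [] k' v (tmul v c hc) hv hw ⟨c, hc, rfl⟩))

/-- Every closed walk in the graph `Γ` on `Σ` can be transformed into the constant walk
at its basepoint by finitely many elementary moves, applied in either direction; i.e. the
2-complex `W_{m,n}` is simply connected. -/
theorem closed_walks_contractible (m n : ℕ) (hm : 1 ≤ m) (hn : 1 ≤ n)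
    (v0 : Equiv.Perm (Fin (m + n))) (hv0 : v0 ∈ GenSet m n)
    (l : List (Equiv.Perm (Fin (m + n))))
    (hhead : l.head? = some v0) (hlast : l.getLast? = some v0)
    (hchain : l.Chain' (GridAdj m n)) (hmem : ∀ v ∈ l, v ∈ GenSet m n) :
    Relation.ReflTransGen (fun a b => GridMove m n a b ∨ GridMove m n b a) l [v0] := by
  cases l with
  | nil => simp at hhead
  | cons a t =>
    simp only [List.head?_cons, Option.some.injEq] at hhead
    subst hhead
    obtain ⟨k, hk⟩ := exists_desc a hv0
    have h1 : Hpy m n (a :: t ++ k) (a :: k) := walk_desc t a a k k hchain hlast hv0 hk hk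
    obtain ⟨R, hR⟩ := desc_back hk
    obtain ⟨l', hl'⟩ : ∃ l', a :: t = l' ++ [a] := by
      rw [List.getLast?_eq_some_iff] at hlast
      exact hlast
    have h2 : Hpy m n (a :: t ++ k ++ R) (a :: k ++ R) := by simpa using h1.ctx [] R
    have h3 : Hpy m n (a :: t ++ k ++ R) (a :: t) := by
      rw [hl']
      simpa using hR.ctx l' []
    exact (h3.symm.trans h2).trans hR
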